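/- Confluent divided difference formula: if f is sufficiently smooth and nodes x₀,...,xₙ are distinct, then the divided difference of f at the multiset where x_i is repeated k_i + 1 times equals (1/(k₀!⋯kₙ!)) ∂^{k₀}_{x₀}⋯∂^{kₙ}_{xₙ} f[x₀,...,xₙ]. -/

import Mathlib

open Filter Topology

/-- Divided difference of `f` at a list of nodes, via the standard recursion. -/
noncomputable def divDiff {K : Type*} [Field K] (f : K → K) : List K → K
  | [] => 0
  | [x] => f x
  | x :: y :: rest =>
      (divDiff f (y :: rest) - divDiff f (x :: (y :: rest).dropLast)) /
        ((y :: rest).getLast (by simp) - x)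
termination_by l => l.length
decreasing_by all_goals simp [List.length_dropLast]

/-- `k`-th partial derivative of a multivariate function in its `i`-th variable. -/
noncomputable def partialIter {m : ℕ} (g : (Fin m → ℝ) → ℝ) (i : Fin m) (k : ℕ) :
    (Fin m → ℝ) → ℝ :=
  fun x => iteratedDeriv k (fun s => g (Function.update x i s)) (x i)

noncomputable def cdT (x : ℝ) (f : ℝ → ℝ) : ℝ → ℝ :=
  fun t => ∫ s in (0:ℝ)..1, deriv f (x + s * (t - x))

noncomputable def cdE : (ℝ → ℝ) → List ℝ → ℝ
  | _, [] => 0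
  | f, [x] => f x
  | f, x :: y :: r => cdE (cdT x f) (y :: r)

def cdSm (f : ℝ → ℝ) : Prop := ∀ j, Differentiable ℝ (iteratedDeriv j f)

theorem cd_hasDeriv (g : ℝ → ℝ) (hg : Differentiable ℝ g) (hg' : Continuous (deriv g))
    (x : ℝ) (j : ℕ) (t : ℝ) :
    HasDerivAt (fun t => ∫ s in (0:ℝ)..1, s ^ j * g (x + s * (t - x)))
      (∫ s in (0:ℝ)..1, s ^ (j+1) * deriv g (x + s * (t - x))) t := by
  have hgc := hg.continuous
  obtain ⟨C, hC⟩ := ((isCompact_Icc (a := (0:ℝ)) (b := 1)).prod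
    (isCompact_closedBall t 1)).exists_bound_of_continuousOn
    (f := fun q : ℝ × ℝ => q.1 ^ (j+1) * deriv g (x + q.1 * (q.2 - x))) (by fun_prop)
  refine (intervalIntegral.hasDerivAt_integral_of_dominated_loc_of_deriv_le
    (F := fun t s => s ^ j * g (x + s * (t - x)))
    (F' := fun t s => s ^ (j+1) * deriv g (x + s * (t - x)))
    (bound := fun _ => C) (Metric.closedBall_mem_nhds t one_pos) ?_ ?_ ?_ ?_ ?_ ?_).2
  · exact Eventually.of_forall fun y => Continuous.aestronglyMeasurable (by fun_prop)
  · exact Continuous.intervalIntegrable (by fun_prop) _ _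
  · exact Continuous.aestronglyMeasurable (by fun_prop)
  · refine Eventually.of_forall fun s hs y hy => hC (s, y) ⟨?_, hy⟩
    rw [Set.uIoc_of_le zero_le_one] at hs
    exact ⟨hs.1.le, hs.2⟩
  · exact intervalIntegrable_const
  · refine Eventually.of_forall fun s hs y hy => ?_
    have h1 : HasDerivAt (fun y : ℝ => x + s * (y - x)) s y := by
      simpa using (((hasDerivAt_id y).sub_const x).const_mul s).const_add x
    have h2 := ((hg (x + s * (y - x))).hasDerivAt.comp y h1).const_mul (s ^ j)
    have h3 : s ^ (j+1) * deriv g (x + s * (y - x)) =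
        s ^ j * (deriv g (x + s * (y - x)) * s) := by ring
    change HasDerivAt (fun y => s ^ j * g (x + s * (y - x)))
      (s ^ (j+1) * deriv g (x + s * (y - x))) y
    rw [h3]
    exact h2

theorem cdSm.cont_deriv {f : ℝ → ℝ} (hf : cdSm f) (j : ℕ) : Continuous (iteratedDeriv j f) :=
  (hf j).continuous

theorem cd_iter {f : ℝ → ℝ} (hf : cdSm f) (x : ℝ) (j : ℕ) :
    iteratedDeriv j (cdT x f) =
      fun t => ∫ s in (0:ℝ)..1, s ^ j * iteratedDeriv (j+1) f (x + s * (t - x)) := by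
  induction j with
  | zero => funext t; simp [cdT]
  | succ j ih =>
    rw [iteratedDeriv_succ, ih]
    funext t
    have := cd_hasDeriv (iteratedDeriv (j+1) f) (hf _)
      (by rw [← iteratedDeriv_succ]; exact hf.cont_deriv _) x j t
    rw [this.deriv, ← iteratedDeriv_succ]

theorem cdSm.T {f : ℝ → ℝ} (hf : cdSm f) (x : ℝ) : cdSm (cdT x f) := by
  intro j
  rw [cd_iter hf]
  intro t
  exact (cd_hasDeriv (iteratedDeriv (j+1) f) (hf _)
      (by rw [← iteratedDeriv_succ]; exact hf.cont_deriv _) x j t).differentiableAt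

theorem cdT_mul {f : ℝ → ℝ} (hf : cdSm f) (x t : ℝ) : (t - x) * cdT x f t = f t - f x := by
  have hd : Differentiable ℝ f := by simpa using hf 0
  have hc : Continuous (deriv f) := by simpa using hf.cont_deriv 1
  have h : ∀ s ∈ Set.uIcc (0:ℝ) 1, HasDerivAt (fun s => f (x + s * (t - x)))
      ((t - x) * deriv f (x + s * (t - x))) s := by
    intro s _
    have h1 : HasDerivAt (fun s : ℝ => x + s * (t - x)) (t - x) s := by
      simpa using ((hasDerivAt_id s).mul_const (t - x)).const_add x
    have h2 := (hd (x + s * (t - x))).hasDerivAt.comp s h1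
    rw [mul_comm]
    exact h2
  have := intervalIntegral.integral_eq_sub_of_hasDerivAt h
    (Continuous.intervalIntegrable (by fun_prop) _ _)
  rw [intervalIntegral.integral_const_mul] at this
  rw [cdT, this]
  simp

theorem cdT_comm {f : ℝ → ℝ} (hf : cdSm f) (x y : ℝ) : cdT y (cdT x f) = cdT x (cdT y f) := by
  by_cases hxy : x = y
  · rw [hxy]
  have hc1 : Continuous (cdT y (cdT x f)) := by simpa using ((hf.T x).T y).cont_deriv 0
  have hc2 : Continuous (cdT x (cdT y f)) := by simpa using ((hf.T y).T x).cont_deriv 0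
  refine Continuous.ext_on (s := ({x, y} : Set ℝ)ᶜ)
    ((Set.toFinite ({x, y} : Set ℝ)).countable.dense_compl ℝ) hc1 hc2 ?_
  intro z hz
  simp only [Set.mem_compl_iff, Set.mem_insert_iff, Set.mem_singleton_iff, not_or] at hz
  have hx : z - x ≠ 0 := sub_ne_zero.2 hz.1
  have hy : z - y ≠ 0 := sub_ne_zero.2 hz.2
  have hyx : y - x ≠ 0 := sub_ne_zero.2 (Ne.symm hxy)
  have e1 := cdT_mul (hf.T x) y z
  have e2 := cdT_mul (hf.T y) x z
  have a1 := cdT_mul hf x z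
  have a2 := cdT_mul hf x y
  have a3 := cdT_mul hf y z
  have a4 := cdT_mul hf y x
  apply mul_left_cancel₀ (mul_ne_zero (mul_ne_zero hx hy) hyx)
  linear_combination (z - x) * (y - x) * e1 - (z-y) * (y - x) * e2 + (y - x) * a1 - (z-x)*a2
    - (y-x) * a3 - (z-y) * a4

theorem cdE_cons_congr {l₁ l₂ : List ℝ} (h : l₁.Perm l₂) :
    ∀ {f : ℝ → ℝ}, cdSm f → cdE f l₁ = cdE f l₂ := by
  induction h with
  | nil => intro f _; rfl
  | @cons x l₁ l₂ h ih =>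
    intro f hf
    cases l₁ with
    | nil => rw [List.nil_perm.1 h]
    | cons a l₁ =>
      cases l₂ with
      | nil => simp at h
      | cons b l₂ => exact ih (hf.T x)
  | swap x y l =>
    intro f hf
    cases l with
    | nil =>
      change cdT y f x = cdT x f y
      by_cases hxy : x = y
      · rw [hxy]
      · apply mul_left_cancel₀ (sub_ne_zero.2 hxy)
        linear_combination cdT_mul hf y x + cdT_mul hf x y
    | cons a l =>
      change cdE (cdT x (cdT y f)) (a :: l) = cdE (cdT y (cdT x f)) (a :: l)
      rw [cdT_comm hf]
  | trans _ _ ih1 ih2 => intro f hf; rw [ih1 hf, ih2 hf]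

theorem cdE_rec_append (S : List ℝ) (x y : ℝ) : ∀ {f : ℝ → ℝ}, cdSm f →
    cdE f (S ++ [y]) - cdE f (S ++ [x]) = (y - x) * cdE f (S ++ [x, y]) := by
  induction S with
  | nil => intro f hf; exact (cdT_mul hf x y).symm
  | cons z S ih =>
    intro f hf
    have key : ∀ w l, cdE f (z :: S ++ w :: l) = cdE (cdT z f) (S ++ w :: l) := by
      intro w l
      cases S <;> rfl
    rw [key, key, key]
    exact ih (hf.T z)

theorem cdE_rec {f : ℝ → ℝ} (hf : cdSm f) (S : List ℝ) (x y : ℝ) :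
    cdE f (y :: S) - cdE f (x :: S) = (y - x) * cdE f (y :: x :: S) := by
  have h := cdE_rec_append S x y hf
  rw [cdE_cons_congr (List.perm_append_comm (l₁ := S) (l₂ := [y])) hf,
    cdE_cons_congr (List.perm_append_comm (l₁ := S) (l₂ := [x])) hf,
    cdE_cons_congr (List.perm_append_comm (l₁ := S) (l₂ := [x,y])) hf,
    cdE_cons_congr (l₁ := [x,y] ++ S) (List.Perm.swap y x S) hf] at h
  exact h

theorem cdE_eq {f : ℝ → ℝ} (hf : cdSm f) (m : ℕ) : ∀ l : List ℝ, l.length = m → l.Nodup →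
    divDiff f l = cdE f l := by
  induction m with
  | zero => intro l hl _; rw [List.length_eq_zero_iff.1 hl]; simp [divDiff, cdE]
  | succ m ih =>
    intro l hl hn
    match l with
    | [x] => simp [divDiff, cdE]
    | x :: y :: r =>
      obtain ⟨S, z, hS⟩ : ∃ S z, y :: r = S ++ [z] :=
        ⟨(y::r).dropLast, (y::r).getLast (by simp), (List.dropLast_append_getLast _).symm⟩
      rw [divDiff]
      simp only [hS] at hn hl ⊢
      have hp : (S ++ [z]).Perm (z :: S) := List.perm_append_comm (l₁ := S) (l₂ := [z])
      have hn2 := ((hp.cons x).nodup_iff).1 hn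
      rw [List.dropLast_concat, List.getLast_append_singleton, ih (S ++ [z]) (by simpa using hl)
        (List.nodup_cons.1 hn).2, ih (x :: S) (by simpa using hl) (by grind),
        cdE_cons_congr hp hf, cdE_rec hf, cdE_cons_congr (hp.cons x) hf,
        cdE_cons_congr (List.Perm.swap z x S) hf]
      have : z - x ≠ 0 := sub_ne_zero.2 (by grind)
      field_simp

theorem cdE_cont {P : Type*} [TopologicalSpace P] (L : List (P → ℝ))
    (hL : ∀ g ∈ L, Continuous g) : ∀ (F : P → ℝ → ℝ), (∀ p, cdSm (F p)) →
    (∀ j, Continuous fun q : P × ℝ => iteratedDeriv j (F q.1) q.2) →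
    Continuous fun p => cdE (F p) (L.map (fun g => g p)) := by
  induction L with
  | nil => intro F _ _; exact continuous_const
  | cons g L ih =>
    intro F hF hc
    have hg : Continuous g := hL g (by simp)
    cases L with
    | nil =>
      have := (hc 0).comp (continuous_id.prodMk hg)
      simpa [cdE, Function.comp_def] using this
    | cons g' L =>
      refine ih (fun g hg => hL g (List.mem_cons_of_mem _ hg)) (fun p => cdT (g p) (F p))
        (fun p => (hF p).T _) ?_
      intro j
      simp_rw [fun p => cd_iter (hF p)]
      refine intervalIntegral.continuous_parametric_intervalIntegral_of_continuous' ?_ 0 1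
      have h1 : Continuous fun w : (P × ℝ) × ℝ =>
          (w.1.1, g w.1.1 + w.2 * (w.1.2 - g w.1.1)) := by fun_prop
      have h2 := (hc (j+1)).comp h1
      exact (continuous_snd.pow j).mul h2

theorem cdE_cont' {P : Type*} [TopologicalSpace P] {f : ℝ → ℝ} (hf : cdSm f) (L : List (P → ℝ))
    (hL : ∀ g ∈ L, Continuous g) : Continuous fun p => cdE f (L.map (fun g => g p)) :=
  cdE_cont L hL (fun _ => f) (fun _ => hf) fun j => (hf.cont_deriv j).comp continuous_snd

theorem cdE_telescope {f : ℝ → ℝ} (hf : cdSm f) (x y : ℝ) (k : ℕ) : ∀ S : List ℝ,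
    cdE f (List.replicate k y ++ S) - cdE f (List.replicate k x ++ S) =
      (y - x) * ∑ j ∈ Finset.range k,
        cdE f (List.replicate (j+1) y ++ (List.replicate (k-j) x ++ S)) := by
  induction k with
  | zero => intro S; simp
  | succ k ih =>
    intro S
    have h1 := ih (y :: S)
    have h2 := cdE_rec hf (List.replicate k x ++ S) x y
    have p1 : cdE f (List.replicate k y ++ y :: S) = cdE f (List.replicate (k+1) y ++ S) :=
      cdE_cons_congr List.perm_middle hf
    have p2 : cdE f (List.replicate k x ++ y :: S) = cdE f (y :: (List.replicate k x ++ S)) :=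
      cdE_cons_congr List.perm_middle hf
    have p3 : ∀ j, cdE f (List.replicate (j+1) y ++ (List.replicate (k-j) x ++ y :: S)) =
        cdE f (List.replicate (j+1+1) y ++ (List.replicate (k+1-(j+1)) x ++ S)) := by
      intro j
      rw [Nat.add_sub_add_right]
      refine cdE_cons_congr ?_ hf
      rw [← List.append_assoc, List.replicate_succ (n := j+1), List.cons_append, ← List.append_assoc]
      exact List.perm_middle
    simp_rw [p3] at h1
    rw [p1, p2] at h1
    rw [Finset.sum_range_succ', mul_add, ← h1]
    simp only [zero_add, Nat.sub_zero, List.replicate_succ, List.replicate_zero,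
      List.cons_append, List.nil_append] at h2 ⊢
    linear_combination h2

theorem cdE_hasDeriv {f : ℝ → ℝ} (hf : cdSm f) (k : ℕ) (S : List ℝ) (x : ℝ) :
    HasDerivAt (fun s => cdE f (List.replicate k s ++ S))
      (k * cdE f (List.replicate (k+1) x ++ S)) x := by
  rw [hasDerivAt_iff_tendsto_slope]
  have hc : Continuous fun y => ∑ j ∈ Finset.range k,
        cdE f (List.replicate (j+1) y ++ (List.replicate (k-j) x ++ S)) := by
    refine continuous_finsetSum _ fun j _ => ?_
    have := cdE_cont' hf (P := ℝ) (List.replicate (j+1) id ++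
      (List.replicate (k-j) x ++ S).map (fun a _ => a)) (by
        intro g hg
        rcases List.mem_append.1 hg with h | h
        · rw [List.eq_of_mem_replicate h]; exact continuous_id
        · obtain ⟨a, _, rfl⟩ := List.mem_map.1 h
          exact continuous_const)
    simpa [Function.comp_def] using this
  have h := (hc.tendsto x).mono_left (nhdsWithin_le_nhds (s := {x}ᶜ))
  have e : ∑ j ∈ Finset.range k,
        cdE f (List.replicate (j+1) x ++ (List.replicate (k-j) x ++ S)) =
        k * cdE f (List.replicate (k+1) x ++ S) := by
    rw [Finset.sum_congr rfl (g := fun _ => cdE f (List.replicate (k+1) x ++ S))]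
    · simp
    · intro j hj
      have := Finset.mem_range.1 hj
      rw [← List.append_assoc, List.replicate_append_replicate]
      congr 3
      omega
  rw [e] at h
  refine h.congr' ?_
  filter_upwards [self_mem_nhdsWithin] with y hy
  have hy' : y - x ≠ 0 := sub_ne_zero.2 hy
  rw [slope_def_field, cdE_telescope hf]
  field_simp

theorem cdE_iter {f : ℝ → ℝ} (hf : cdSm f) (a : ℝ) (S : List ℝ) (k : ℕ) :
    iteratedDeriv k (fun s => a * cdE f (s :: S)) =
      fun s => a * k.factorial * cdE f (List.replicate (k+1) s ++ S) := by
  induction k with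
  | zero => funext s; simp
  | succ k ih =>
    rw [iteratedDeriv_succ, ih]
    funext s
    rw [((cdE_hasDeriv hf (k+1) S s).const_mul (a * k.factorial)).deriv, Nat.factorial_succ]
    push_cast
    ring

noncomputable def cdD {m : ℕ} (f : ℝ → ℝ) (c : Fin m → ℕ) (y : Fin m → ℝ) : ℝ :=
  cdE f ((List.ofFn fun i => List.replicate (c i + 1) (y i)).flatten)

theorem cdD_split {m : ℕ} {f : ℝ → ℝ} (hf : cdSm f) (c : Fin m → ℕ) (y : Fin m → ℝ) (i : Fin m) :
    ∃ S : List ℝ, ∀ q s, cdD f (Function.update c i q) (Function.update y i s) =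
      cdE f (List.replicate (q+1) s ++ S) := by
  refine ⟨(((List.finRange m).erase i).map fun j => List.replicate (c j + 1) (y j)).flatten, ?_⟩
  intro q s
  have hp : (List.finRange m).Perm (i :: (List.finRange m).erase i) :=
    List.perm_cons_erase (List.mem_finRange i)
  rw [cdD, List.ofFn_eq_map, cdE_cons_congr (hp.map _).flatten hf, List.map_cons,
    List.flatten_cons]
  simp only [Function.update_self]
  congr 3
  refine List.map_congr_left fun j hj => ?_
  have : j ≠ i := ((List.nodup_finRange m).mem_erase_iff.1 hj).1
  simp [this]

theorem cd_step {m : ℕ} {f : ℝ → ℝ} (hf : cdSm f) (g : (Fin m → ℝ) → ℝ) (c : Fin m → ℕ) (a : ℝ)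
    (i : Fin m) (hi : c i = 0) (k : ℕ)
    (h : ∀ y, Function.Injective y → g y = a * cdD f c y) :
    ∀ y, Function.Injective y →
      partialIter g i k y = a * k.factorial * cdD f (Function.update c i k) y := by
  intro y hy
  obtain ⟨S, hS⟩ := cdD_split hf c y i
  have hev : (fun s => g (Function.update y i s)) =ᶠ[𝓝 (y i)] fun s => a * cdE f (s :: S) := by
    have h1 : ∀ᶠ s in 𝓝 (y i), ∀ j, j ≠ i → s ≠ y j := by
      rw [Filter.eventually_all]
      intro j
      by_cases hj : j = i
      · simp [hj]
      · have : y i ≠ y j := fun e => hj (hy e).symm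
        filter_upwards [isOpen_ne.mem_nhds this] with s hs _ using hs
    filter_upwards [h1] with s hs
    have hinj : Function.Injective (Function.update y i s) := by
      intro p q hpq
      by_cases hp : p = i <;> by_cases hq : q = i
      · rw [hp, hq]
      · subst hp; simp [hq] at hpq; exact absurd hpq (hs q hq)
      · subst hq; simp [hp] at hpq; exact absurd hpq.symm (hs p hp)
      · simp [hp, hq] at hpq; exact hy hpq
    rw [h _ hinj]
    have := hS 0 s
    rw [← hi, Function.update_eq_self, hi] at this
    rw [this]
    simp
  rw [partialIter, hev.iteratedDeriv_eq, cdE_iter hf]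
  have := hS k (y i)
  rw [Function.update_eq_self] at this
  rw [this]

theorem cd_fold {m : ℕ} {f : ℝ → ℝ} (hf : cdSm f) (k : Fin m → ℕ) (l : List (Fin m)) :
    l.Nodup → ∀ (g : (Fin m → ℝ) → ℝ) (c : Fin m → ℕ) (a : ℝ), (∀ i ∈ l, c i = 0) →
    (∀ y, Function.Injective y → g y = a * cdD f c y) →
    ∀ y, Function.Injective y → l.foldl (fun g i => partialIter g i (k i)) g y =
      a * (l.map fun i => ((k i).factorial : ℝ)).prod *
        cdD f (fun i => if i ∈ l then k i else c i) y := by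
  induction l with
  | nil => intro _ g c a _ h y hy; simpa using h y hy
  | cons i l ih =>
    intro hn g c a hc h y hy
    obtain ⟨hil, hn'⟩ := List.nodup_cons.1 hn
    have h1 := cd_step hf g c a i (hc i (by simp)) (k i) h
    have h2 := ih hn' _ _ _ (fun j hj => by
      have : j ≠ i := fun e => hil (e ▸ hj)
      simp [this, hc j (List.mem_cons_of_mem _ hj)]) h1 y hy
    rw [List.foldl_cons, h2, List.map_cons, List.prod_cons, ← mul_assoc]
    congr 2
    funext j
    by_cases hj : j = i
    · subst hj; simp [hil]
    · simp [hj]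

/-- **Confluent divided difference formula**: for `f` smooth and distinct nodes
`x₀,…,xₙ`, the divided difference at the multiset where `xᵢ` is repeated `kᵢ + 1`
times — defined as the limit of divided differences over pairwise-distinct nodes
coalescing to that multiset — equals
`(1/(k₀!⋯kₙ!)) ∂^{k₀}_{x₀} ⋯ ∂^{kₙ}_{xₙ} f[x₀,…,xₙ]`. -/
theorem confluent_divDiff (n : ℕ) (f : ℝ → ℝ) (hf : ContDiff ℝ (⊤ : ℕ∞) f)
    (x : Fin (n + 1) → ℝ) (hx : Function.Injective x) (k : Fin (n + 1) → ℕ) :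
    Tendsto
      (fun y : (i : Fin (n + 1)) → Fin (k i + 1) → ℝ =>
        divDiff f ((List.ofFn fun i => List.ofFn fun j => y i j).flatten))
      (nhdsWithin (fun i _ => x i)
        {y | ((List.ofFn fun i => List.ofFn fun j => y i j).flatten).Nodup})
      (nhds ((∏ i, ((k i).factorial : ℝ))⁻¹ *
        (((List.finRange (n + 1)).foldl (fun g i => partialIter g i (k i))
          (fun y => divDiff f (List.ofFn y))) x))) := by
  have hs : cdSm f := fun j => hf.differentiable_iteratedDeriv j (by exact_mod_cast WithTop.coe_lt_top j)
  have hfold := cd_fold hs k (List.finRange (n+1)) (List.nodup_finRange _)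
    (fun y => divDiff f (List.ofFn y)) (fun _ => 0) 1 (fun _ _ => rfl) (by
      intro y hy
      rw [cdE_eq hs _ _ rfl (List.nodup_ofFn.2 hy), cdD, one_mul]
      congr 1
      rw [List.ofFn_eq_map, List.ofFn_eq_map]
      induction List.finRange (n+1) with
      | nil => rfl
      | cons a l ih => simp [ih]) x hx
  have hprod : ((List.finRange (n+1)).map fun i => ((k i).factorial : ℝ)).prod =
      ∏ i, ((k i).factorial : ℝ) := by
    rw [← List.ofFn_eq_map, List.prod_ofFn]
  have hne : (∏ i, ((k i).factorial : ℝ)) ≠ 0 :=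
    Finset.prod_ne_zero_iff.2 fun i _ => by exact_mod_cast (k i).factorial_ne_zero
  rw [hfold, hprod, one_mul, inv_mul_cancel_left₀ hne]
  have hc := cdE_cont' hs (P := (i : Fin (n + 1)) → Fin (k i + 1) → ℝ)
    ((List.ofFn fun i => List.ofFn fun j =>
      (fun y : (i : Fin (n + 1)) → Fin (k i + 1) → ℝ => y i j)).flatten) (by
      intro g hg
      simp only [List.mem_flatten, List.mem_ofFn] at hg
      obtain ⟨_, ⟨i, rfl⟩, hg⟩ := hg
      obtain ⟨j, rfl⟩ := (List.mem_ofFn ..).1 hg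
      fun_prop)
  simp only [List.map_flatten, List.map_ofFn, Function.comp_def] at hc
  have ht := (hc.tendsto (fun i _ => x i)).mono_left (nhdsWithin_le_nhds
    (s := {y | ((List.ofFn fun i => List.ofFn fun j => y i j).flatten).Nodup}))
  have e : cdE f (List.ofFn fun i => List.ofFn fun _ : Fin (k i + 1) => x i).flatten =
      cdD f (fun i => if i ∈ List.finRange (n+1) then k i else 0) x := by
    simp only [cdD, List.ofFn_const, List.mem_finRange, if_true]
  rw [e] at ht
  refine ht.congr' ?_
  filter_upwards [self_mem_nhdsWithin] with y hy
  exact (cdE_eq hs _ _ rfl hy).symm
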